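/- Let f⁰, f¹, …, fᵗ be a b-decrement process on a nonnegative vector f⁰ ∈ ℝⁿ with integer b ≥ 2, and let W = ∑_{i=1}^n f⁰_i. If a coordinate k has initial weight f⁰_k = α·W with α·b > 1, then its total decrease satisfies f⁰_k − fᵗ_k ≤ (1 − α)·W/(b − 1). (Lemma 7, due to Bose et al.) -/

import Mathlib

/-!
Whenever `k` loses `Δ`, at least `b` coordinates lose `Δ`, so the total weight drops by at least
`b * Δ`. Summing over the steps, `b * (f 0 k - f t k) ≤ ∑ f 0 - ∑ f t`. Since the final total is at
least `f t k`, this gives `(b - 1) * (f 0 k - f t k) ≤ W - f 0 k = (1 - α) * W`.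
-/

/-- A `b`-decrement process of length `t` on vectors indexed by `Fin n`:
all coordinates stay nonnegative, and at each step `s < t` some set of at least `b`
coordinates is decreased by a common positive amount `Δ`, all other coordinates
staying unchanged. -/
def IsDecrementProcess {n : ℕ} (b t : ℕ) (f : ℕ → Fin n → ℝ) : Prop :=
  (∀ s ≤ t, ∀ i, 0 ≤ f s i) ∧
  ∀ s < t, ∃ Δ : ℝ, 0 < Δ ∧ ∃ D : Finset (Fin n), b ≤ D.card ∧
    (∀ i ∈ D, f (s + 1) i = f s i - Δ) ∧ (∀ i ∉ D, f (s + 1) i = f s i)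

lemma IsDecrementProcess.step {n b t : ℕ} {f : ℕ → Fin n → ℝ} (hf : IsDecrementProcess b t f)
    (k : Fin n) {s : ℕ} (hs : s < t) :
    b * (f s k - f (s + 1) k) ≤ ∑ i, f s i - ∑ i, f (s + 1) i := by
  obtain ⟨Δ, hΔ, D, hD, h1, h2⟩ := hf.2 s hs
  have hdiff : ∀ i, f s i - f (s + 1) i = if i ∈ D then Δ else 0 := by
    intro i
    by_cases hi : i ∈ D
    · simp [hi, h1 i hi]
    · simp [hi, h2 i hi]
  have hsum : ∑ i, f s i - ∑ i, f (s + 1) i = D.card * Δ := by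
    rw [← Finset.sum_sub_distrib]
    simp [hdiff]
  have hk : f s k - f (s + 1) k ≤ Δ := by
    rw [hdiff]
    split_ifs <;> linarith
  have hD' : (b : ℝ) ≤ D.card := by exact_mod_cast hD
  rw [hsum]
  calc (b : ℝ) * (f s k - f (s + 1) k) ≤ b * Δ := by gcongr
    _ ≤ D.card * Δ := by gcongr

lemma IsDecrementProcess.mul_sub_le {n b t : ℕ} {f : ℕ → Fin n → ℝ}
    (hf : IsDecrementProcess b t f) (k : Fin n) :
    ∀ s ≤ t, b * (f 0 k - f s k) ≤ ∑ i, f 0 i - ∑ i, f s i := by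
  intro s
  induction s with
  | zero => simp
  | succ s ih =>
    intro hs
    linarith [ih (by omega), hf.step k (show s < t by omega)]

/-- Lemma 7, Bose et al.: a coordinate of initial weight `α·W`
with `α·b > 1` suffers total decrease at most `(1 − α)·W/(b − 1)`. -/
theorem bose_et_al_bound {n : ℕ} (b t : ℕ) (hb : 2 ≤ b)
    (f : ℕ → Fin n → ℝ) (hf : IsDecrementProcess b t f)
    (W : ℝ) (hW : W = ∑ i, f 0 i) (α : ℝ) (k : Fin n)
    (hk : f 0 k = α * W) (hα : 1 < α * b) :
    f 0 k - f t k ≤ (1 - α) * W / (b - 1) := by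
  have hb' : (2 : ℝ) ≤ b := by exact_mod_cast hb
  have h := hf.mul_sub_le k t le_rfl
  have hle : f t k ≤ ∑ i, f t i :=
    Finset.single_le_sum (fun i _ => hf.1 t le_rfl i) (Finset.mem_univ k)
  rw [le_div_iff₀ (by linarith)]
  linarith
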